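/- Let W₁, V₁ ∈ ℂ[x₁,…,x_m] and W₂, V₂ ∈ ℂ[y₁,…,y_k] be admissible polynomials (the x-variables disjoint from the y-variables), let G₁ be a group of common diagonal symmetries of W₁ and V₁, and G₂ a group of common diagonal symmetries of W₂ and V₂. Suppose φ₁ : Q_{W₁} → Q_{V₁} and φ₂ : Q_{W₂} → Q_{V₂} are G₁-equivariant (resp. G₂-equivariant) ℂ-algebra isomorphisms preserving the weighted grading and the pairings. Then there exists a (G₁ × G₂)-equivariant ℂ-algebra isomorphism φ : Q_{W₁+W₂} → Q_{V₁+V₂} preserving the weighted grading and the pairings, satisfying φ(ι₁(a)·ι₂(b)) = ι₁′(φ₁(a))·ι₂′(φ₂(b)) for all a ∈ Q_{W₁}, b ∈ Q_{W₂}, where ι₁, ι₂ (resp. ι₁′, ι₂′) are the algebra maps Q_{W₁}, Q_{W₂} → Q_{W₁+W₂} (resp. into Q_{V₁+V₂}) induced by inclusion of variables. -/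

import Mathlib

open MvPolynomial
open scoped TensorProduct

noncomputable section

namespace LG

variable {σ : Type*} [Fintype σ] [DecidableEq σ]

/-- The Jacobian ideal of a polynomial `W`, generated by its partial derivatives. -/
def jacobianIdeal (W : MvPolynomial σ ℂ) : Ideal (MvPolynomial σ ℂ) :=
  Ideal.span (Set.range fun i => pderiv i W)

/-- The Milnor ring (local algebra) `Q_W = ℂ[x]/(∂W/∂x₁,…,∂W/∂xₙ)`. -/
abbrev MilnorRing (W : MvPolynomial σ ℂ) :=
  MvPolynomial σ ℂ ⧸ jacobianIdeal W

/-- The canonical projection onto the Milnor ring. -/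
def mkQ (W : MvPolynomial σ ℂ) : MvPolynomial σ ℂ →ₐ[ℂ] MilnorRing W :=
  Ideal.Quotient.mkₐ ℂ (jacobianIdeal W)

/-- `W` is quasihomogeneous with (positive rational) weights `q`:
every monomial `x^a` occurring in `W` satisfies `∑ i, a i * q i = 1`. -/
def IsQuasiHomogeneous (W : MvPolynomial σ ℂ) (q : σ → ℚ) : Prop :=
  (∀ i, 0 < q i) ∧ ∀ a ∈ W.support, ∑ i, (a i : ℚ) * q i = 1

/-- `W` is nondegenerate: the origin is the only common zero of its partial
derivatives. -/
def Nondegenerate (W : MvPolynomial σ ℂ) : Prop :=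
  ∀ x : σ → ℂ, (∀ i, eval x (pderiv i W) = 0) → x = 0

/-- `W` is admissible with weights `q`: nondegenerate, quasihomogeneous with
uniquely determined weights, and without cross-term monomials `xᵢxⱼ` (`i ≠ j`). -/
def Admissible (W : MvPolynomial σ ℂ) (q : σ → ℚ) : Prop :=
  Nondegenerate W ∧ IsQuasiHomogeneous W q ∧
    (∀ q', IsQuasiHomogeneous W q' → q' = q) ∧
    ∀ a ∈ W.support, ∀ i j, i ≠ j → a ≠ Finsupp.single i 1 + Finsupp.single j 1

/-- The Hessian of `W`: the determinant of the matrix of second partial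
derivatives. -/
def hess (W : MvPolynomial σ ℂ) : MvPolynomial σ ℂ :=
  Matrix.det (Matrix.of fun i j => pderiv i (pderiv j W))

/-- The homogeneous component of the Milnor ring of weighted degree `d`:
the image in `Q_W` of the span of the monomials of weighted degree `d`. -/
def gradedPiece (W : MvPolynomial σ ℂ) (q : σ → ℚ) (d : ℚ) :
    Submodule ℂ (MilnorRing W) :=
  (weightedHomogeneousSubmodule ℂ q d).map (mkQ W).toLinearMap

/-- The top weighted degree `∑ᵢ (1 - 2qᵢ)` of the Milnor ring. -/
def topDegree (q : σ → ℚ) : ℚ := ∑ i, (1 - 2 * q i)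

/-- The part of the Milnor ring of weighted degree below the top degree. -/
def belowTop (W : MvPolynomial σ ℂ) (q : σ → ℚ) : Submodule ℂ (MilnorRing W) :=
  ⨆ (d : ℚ) (_ : d < topDegree q), gradedPiece W q d

/-- `p` is the pairing of the Milnor ring of `W`: the top weighted-degree
homogeneous component of `a * b` equals `(p a b / μ) • [Hess W]`, i.e.
`a * b - (p a b / μ) • [Hess W]` lies in the part of degree `< topDegree q`. -/
def IsMilnorPairing (W : MvPolynomial σ ℂ) (q : σ → ℚ)
    (p : MilnorRing W → MilnorRing W → ℂ) : Prop :=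
  ∀ a b : MilnorRing W,
    a * b - (p a b / (Module.finrank ℂ (MilnorRing W) : ℂ)) • mkQ W (hess W)
      ∈ belowTop W q

/-- The rescaling substitution `xᵢ ↦ ζᵢ · xᵢ`. -/
def scaleVars (ζ : σ → ℂ) : MvPolynomial σ ℂ →ₐ[ℂ] MvPolynomial σ ℂ :=
  aeval fun i => C (ζ i) * X i

/-- `φ : Q_W → Q_V` is equivariant for the diagonal symmetry `ζ`, expressed on
representatives: the action of `ζ` sends the class of `p` to
`det ζ • [p ∘ ζ]`, and `φ` intertwines the two actions. -/
def EquivariantAt (W V : MvPolynomial σ ℂ)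
    (φ : MilnorRing W → MilnorRing V) (ζ : σ → ℂ) : Prop :=
  ∀ p r : MvPolynomial σ ℂ, φ (mkQ W p) = mkQ V r →
    φ ((∏ i, ζ i) • mkQ W (scaleVars ζ p)) = (∏ i, ζ i) • mkQ V (scaleVars ζ r)

/-- `φ : Q_W → Q_V` preserves the weighted grading. -/
def PreservesGrading {σ τ : Type*} [Fintype σ] [DecidableEq σ]
    [Fintype τ] [DecidableEq τ]
    {W : MvPolynomial σ ℂ} {V : MvPolynomial τ ℂ}
    (φ : MilnorRing W → MilnorRing V) (qW : σ → ℚ) (qV : τ → ℚ) : Prop :=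
  ∀ d : ℚ, ∀ a ∈ gradedPiece W qW d, φ a ∈ gradedPiece V qV d

/-- `φ : Q_W → Q_V` preserves the pairings: `⟨a,b⟩_{Q_W} = ⟨φ a, φ b⟩_{Q_V}`. -/
def PreservesPairings {σ τ : Type*} [Fintype σ] [DecidableEq σ]
    [Fintype τ] [DecidableEq τ]
    {W : MvPolynomial σ ℂ} {V : MvPolynomial τ ℂ}
    (φ : MilnorRing W → MilnorRing V) (qW : σ → ℚ) (qV : τ → ℚ) : Prop :=
  ∀ pW pV, IsMilnorPairing W qW pW → IsMilnorPairing V qV pV →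
    ∀ a b, pW a b = pV (φ a) (φ b)

end LG

open LG

/-- The sum `W₁ + W₂` of two polynomials in disjoint sets of variables,
regarded as a polynomial in all the variables. -/
def sumPoly {m k : ℕ} (W₁ : MvPolynomial (Fin m) ℂ) (W₂ : MvPolynomial (Fin k) ℂ) :
    MvPolynomial (Fin m ⊕ Fin k) ℂ :=
  rename Sum.inl W₁ + rename Sum.inr W₂

/-!
`Q_{W₁+W₂}` is `Q_{W₁} ⊗ Q_{W₂}`, the Hessian of `W₁ + W₂` is the product of the Hessians, and
`φ` is `φ₁ ⊗ φ₂`; only the preservation of pairings needs an argument.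

The Hessian of a nondegenerate quasihomogeneous `W` is not in its Jacobian ideal: Euler's formula
writes the partial derivatives as the Hessian matrix, up to weights, times the variables, and the
transformation law for residues compares this with `xᵢ ^ (N + 1) = xᵢ ^ N * xᵢ`, where
`∏ i, xᵢ ^ N` is visibly not in the ideal of the `xᵢ ^ (N + 1)`. Hence there is a linear form `ℓ`
supported in top degree with `ℓ(Hess W) = 1`, and every pairing is `⟨a, b⟩ = μ ℓ(ab)`. So `φ`
preserves pairings as soon as it preserves `ℓ`, and the product `ℓ₁ ⊗ ℓ₂` is such a form for
`W₁ + W₂`.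

Conversely `φᵢ` preserves `ℓᵢ` if the pairings of `Q_{Wᵢ}` and `Q_{Vᵢ}` exist, that is, if the
Hessian spans the Milnor ring modulo the part below top degree; contracting with the residue of the
other factor deduces this from the same property of the sums.
-/

namespace LG

open Matrix

section Determinant

variable {n R : Type*} [Fintype n] [DecidableEq n] [CommRing R]

lemma mul_det_mem_of_mulVec_mem {I : Ideal R} {A : Matrix n n R} {v : n → R}
    (h : ∀ i, (A *ᵥ v) i ∈ I) (j : n) : v j * A.det ∈ I := by
  have cramer : (A.adjugate *ᵥ (A *ᵥ v)) j = v j * A.det := by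
    rw [mulVec_mulVec, adjugate_mul, smul_mulVec, one_mulVec, Pi.smul_apply, smul_eq_mul, mul_comm]
  rw [← cramer]
  exact Ideal.sum_mem _ fun i _ => Ideal.mul_mem_left _ _ (h i)

variable {v w : n → R}

lemma det_updateRow_sub_det_mem_span {A : Matrix n n R} {b : n → R} {i : n}
    (hv : ∀ x, v i * x ∈ Ideal.span (w '' {i}ᶜ) → x ∈ Ideal.span (w '' {i}ᶜ))
    (hA : A *ᵥ v = w) (hb : b ⬝ᵥ v = w i) :
    (A.updateRow i b).det - A.det ∈ Ideal.span (w '' {i}ᶜ) := by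
  have split : (A.updateRow i b).det - A.det = (A.updateRow i (b - A i)).det := by
    have add := det_updateRow_add A i (b - A i) (A i)
    rw [sub_add_cancel, updateRow_eq_self] at add
    exact sub_eq_of_eq_add add
  rw [split]
  refine hv _ (mul_det_mem_of_mulVec_mem (fun j => ?_) i)
  by_cases hj : j = i
  · subst hj
    have : (A.updateRow j (b - A j) *ᵥ v) j = 0 := by
      rw [mulVec, updateRow_self, sub_dotProduct, hb, ← hA, mulVec, sub_self]
    exact this ▸ zero_mem _
  · have : (A.updateRow i (b - A i) *ᵥ v) j = w j := by
      rw [mulVec, updateRow_ne hj, ← hA, mulVec]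
    exact this ▸ Ideal.subset_span ⟨j, hj, rfl⟩

/-- The rows of `B` are replaced by those of `A` one at a time. -/
lemma det_sub_det_mem_span_range {A B : Matrix n n R}
    (hv : ∀ i x, v i * x ∈ Ideal.span (w '' {i}ᶜ) → x ∈ Ideal.span (w '' {i}ᶜ))
    (hA : A *ᵥ v = w) (hB : B *ᵥ v = w) : A.det - B.det ∈ Ideal.span (Set.range w) := by
  let M (s : Finset n) : Matrix n n R := of (s.piecewise A B)
  have hM (s : Finset n) : M s *ᵥ v = w := by
    ext i
    by_cases hi : i ∈ s
    · rw [mulVec, show M s i = A i from s.piecewise_eq_of_mem A B hi, ← hA, mulVec]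
    · rw [mulVec, show M s i = B i from s.piecewise_eq_of_notMem A B hi, ← hB, mulVec]
  have mem (s : Finset n) : (M s).det - B.det ∈ Ideal.span (Set.range w) := by
    induction s using Finset.induction_on with
    | empty =>
      rw [show M ∅ = B from Finset.piecewise_empty A B, sub_self]
      exact zero_mem _
    | insert i s _ ih =>
      have step : (M (insert i s)).det - (M s).det ∈ Ideal.span (w '' {i}ᶜ) := by
        have : M (insert i s) = (M s).updateRow i (A i) := s.piecewise_insert A B i
        rw [this]
        exact det_updateRow_sub_det_mem_span (hv i) (hM s) (congrFun hA i)
      rw [← sub_add_sub_cancel _ (M s).det]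
      exact add_mem (Ideal.span_mono (Set.image_subset_range _ _) step) ih
  rw [← show M Finset.univ = A from Finset.piecewise_univ A B]
  exact mem Finset.univ

/-- A form of the transformation law for Grothendieck residues: if `w = B *ᵥ f`, then `det B` maps
`Ideal.span (Set.range f)` into `Ideal.span (Set.range w)` and `det A` to `det D` modulo the
latter. -/
lemma det_notMem_span_range {f : n → R} {A D : Matrix n n R}
    (hv : ∀ i x, v i * x ∈ Ideal.span (w '' {i}ᶜ) → x ∈ Ideal.span (w '' {i}ᶜ))
    (hA : A *ᵥ v = f) (hD : D *ᵥ v = w) (hw : ∀ i, w i ∈ Ideal.span (Set.range f))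
    (hdet : D.det ∉ Ideal.span (Set.range w)) : A.det ∉ Ideal.span (Set.range f) := by
  intro hAf
  choose B hB using fun i => Ideal.mem_span_range_iff_exists_fun.1 (hw i)
  have hBf : of B *ᵥ f = w := funext hB
  have hBA : (of B * A).det - D.det ∈ Ideal.span (Set.range w) :=
    det_sub_det_mem_span_range hv (by rw [← mulVec_mulVec, hA, hBf]) hD
  have hBdet : Ideal.span (Set.range f) * Ideal.span {(of B).det} ≤ Ideal.span (Set.range w) := by
    rw [Ideal.span_mul_span', Ideal.span_le]
    rintro _ ⟨_, ⟨j, rfl⟩, _, rfl, rfl⟩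
    exact mul_det_mem_of_mulVec_mem (fun i => hBf ▸ Ideal.subset_span ⟨i, rfl⟩) j
  refine hdet ((Submodule.sub_mem_iff_right _ ?_).1 hBA)
  rw [det_mul, mul_comm]
  exact hBdet (Ideal.mul_mem_mul hAf (Ideal.mem_span_singleton_self _))

end Determinant

section PowersOfVariables

variable {σ R : Type*} [CommRing R]

lemma mem_span_X_pow_image_iff {N : ℕ} {s : Set σ} {p : MvPolynomial σ R} :
    p ∈ Ideal.span ((fun i => (X i : MvPolynomial σ R) ^ N) '' s) ↔
      ∀ a ∈ p.support, ∃ i ∈ s, N ≤ a i := by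
  have : (fun i => (X i : MvPolynomial σ R) ^ N) '' s =
      (fun a => monomial a 1) '' ((fun i => Finsupp.single i N) '' s) := by
    simp only [Set.image_image, X_pow_eq_monomial]
  simp [this, mem_ideal_span_monomial_image]

lemma mem_span_X_pow_image_of_X_mul_mem {N : ℕ} {s : Set σ} {i : σ} (hi : i ∉ s)
    {p : MvPolynomial σ R}
    (h : X i * p ∈ Ideal.span ((fun j => (X j : MvPolynomial σ R) ^ N) '' s)) :
    p ∈ Ideal.span ((fun j => (X j : MvPolynomial σ R) ^ N) '' s) := by
  rw [mem_span_X_pow_image_iff] at h ⊢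
  intro a ha
  obtain ⟨j, hj, hle⟩ := h (Finsupp.single i 1 + a) <| by
    rwa [mem_support_iff, coeff_X_mul, ← mem_support_iff]
  have hij : j ≠ i := fun hji => hi (hji ▸ hj)
  exact ⟨j, hj, by simpa [Finsupp.single_eq_of_ne hij] using hle⟩

variable [Fintype σ]

lemma prod_X_pow_notMem_span_X_pow [Nontrivial R] (N : ℕ) :
    ∏ i, (X i : MvPolynomial σ R) ^ N ∉
      Ideal.span (Set.range fun i => (X i : MvPolynomial σ R) ^ (N + 1)) := by
  have hprod : ∏ i, (X i : MvPolynomial σ R) ^ N = monomial (∑ i, Finsupp.single i N) 1 := by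
    simp only [monomial_sum_one, X_pow_eq_monomial]
  rw [← Set.image_univ, mem_span_X_pow_image_iff, hprod]
  intro h
  obtain ⟨i, -, hi⟩ := h (∑ i, Finsupp.single i N) (by classical simp [coeff_monomial])
  classical simp [Finsupp.finsetSum_apply, Finsupp.single_apply] at hi

lemma det_notMem_span_range_of_X_pow_mem [DecidableEq σ] [Nontrivial R]
    {f : σ → MvPolynomial σ R} {A : Matrix σ σ (MvPolynomial σ R)} {N : ℕ}
    (hA : A *ᵥ X = f) (hN : ∀ i, X i ^ (N + 1) ∈ Ideal.span (Set.range f)) :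
    A.det ∉ Ideal.span (Set.range f) := by
  refine det_notMem_span_range (w := fun i => X i ^ (N + 1)) (D := diagonal fun i => X i ^ N)
    (fun i p => mem_span_X_pow_image_of_X_mul_mem (by simp)) hA ?_ hN ?_
  · ext1 i
    rw [mulVec_diagonal, pow_succ]
  · rw [det_diagonal]
    exact prod_X_pow_notMem_span_X_pow N

end PowersOfVariables

section WeightedHomogeneous

lemma sum_weight_smul_X_mul_pderiv {σ R S : Type*} [Fintype σ] [CommSemiring R] [CommSemiring S]
    [Algebra S R] {w : σ → S} {d : S} {p : MvPolynomial σ R} (hp : IsWeightedHomogeneous w p d) :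
    ∑ i, w i • (X i * pderiv i p) = d • p := by
  induction hp using IsWeightedHomogeneous.induction_on with
  | zero => simp
  | add p r _ _ hp hr => simp only [map_add, mul_add, smul_add, Finset.sum_add_distrib, hp, hr]
  | monomial a r ha =>
    simp only [X_mul_pderiv_monomial, ← ha, Finsupp.weight_eq_sum, Finset.sum_smul]
    exact Finset.sum_congr rfl fun i _ => by rw [smul_comm, smul_assoc]

lemma eq_C_of_isWeightedHomogeneous_zero {σ R M : Type*} [CommSemiring R] [AddCommMonoid M]
    [PartialOrder M] [IsOrderedCancelAddMonoid M] {w : σ → M} (hw : ∀ i, 0 < w i)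
    {p : MvPolynomial σ R} (hp : IsWeightedHomogeneous w p 0) : p = C (coeff 0 p) := by
  refine hp.eq_monomial_of_unique_weight fun a ha => ?_
  rw [Finsupp.weight_apply, Finsupp.sum,
    Finset.sum_eq_zero_iff_of_nonneg fun i _ => nsmul_nonneg (hw i).le _] at ha
  by_contra hne
  obtain ⟨i, hi⟩ := Finsupp.support_nonempty_iff.2 hne
  exact (nsmul_pos (hw i) (Finsupp.mem_support_iff.1 hi)).ne' (ha i hi)

lemma isWeightedHomogeneous_rename {σ τ R M : Type*} [CommSemiring R] [AddCommMonoid M]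
    {f : σ → τ} {w : τ → M} {d : M} {p : MvPolynomial σ R}
    (hp : IsWeightedHomogeneous (w ∘ f) p d) : IsWeightedHomogeneous w (rename f p) d := by
  intro a ha
  obtain ⟨b, rfl, hb⟩ := coeff_rename_ne_zero _ _ _ ha
  rw [← hp hb, Finsupp.weight_apply, Finsupp.weight_apply,
    Finsupp.sum_mapDomain_index (h := fun i c => c • w i) (fun _ => zero_nsmul _)
      fun _ _ _ => add_nsmul _ _ _]
  rfl

end WeightedHomogeneous

section MilnorRing

variable {σ : Type*} {W : MvPolynomial σ ℂ}

lemma mkQ_surjective (W : MvPolynomial σ ℂ) : Function.Surjective (mkQ W) :=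
  Ideal.Quotient.mkₐ_surjective _ _

lemma mkQ_eq_zero_iff {p : MvPolynomial σ ℂ} : mkQ W p = 0 ↔ p ∈ jacobianIdeal W :=
  Ideal.Quotient.eq_zero_iff_mem

lemma mkQ_pderiv (W : MvPolynomial σ ℂ) (i : σ) : mkQ W (pderiv i W) = 0 :=
  mkQ_eq_zero_iff.2 (Ideal.subset_span ⟨i, rfl⟩)

lemma jacobianIdeal_ne_top [Nontrivial (MilnorRing W)] : jacobianIdeal W ≠ ⊤ :=
  Ideal.Quotient.nontrivial_iff.1 inferInstance

/-- The algebra map out of the Milnor ring of `W` induced by an algebra map out of the polynomial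
ring that kills the partial derivatives of `W`. -/
def liftMilnor {B : Type*} [Semiring B] [Algebra ℂ B] (f : MvPolynomial σ ℂ →ₐ[ℂ] B)
    (hf : ∀ i, f (pderiv i W) = 0) : MilnorRing W →ₐ[ℂ] B :=
  Ideal.Quotient.liftₐ (jacobianIdeal W) f fun _ hp =>
    (Ideal.span_le (I := RingHom.ker f)).2 (Set.range_subset_iff.2 hf) hp

lemma liftMilnor_mkQ {B : Type*} [Semiring B] [Algebra ℂ B] (f : MvPolynomial σ ℂ →ₐ[ℂ] B)
    (hf : ∀ i, f (pderiv i W) = 0) (p : MvPolynomial σ ℂ) : liftMilnor f hf (mkQ W p) = f p := rfl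

lemma milnorRing_algHom_ext {B : Type*} [Semiring B] [Algebra ℂ B] {f g : MilnorRing W →ₐ[ℂ] B}
    (h : ∀ i, f (mkQ W (X i)) = g (mkQ W (X i))) : f = g :=
  Ideal.Quotient.algHom_ext _ (MvPolynomial.algHom_ext h)

end MilnorRing

section Nondegenerate

variable {σ : Type*} [Finite σ] {W : MvPolynomial σ ℂ}

lemma Nondegenerate.exists_X_pow_mem (h : Nondegenerate W) :
    ∃ N : ℕ, ∀ i, X i ^ (N + 1) ∈ jacobianIdeal W := by
  have hrad (i : σ) : X i ∈ (jacobianIdeal W).radical := by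
    rw [← vanishingIdeal_zeroLocus_eq_radical (K := ℂ), mem_vanishingIdeal_iff]
    intro x hx
    rw [jacobianIdeal, zeroLocus_span] at hx
    have hx0 : x = 0 := h x fun i => by simpa [aeval_eq_eval] using hx _ ⟨i, rfl⟩
    simp [hx0]
  choose n hn using hrad
  obtain ⟨N, hN⟩ := (Set.finite_range n).bddAbove
  exact ⟨N, fun i => Ideal.pow_mem_of_pow_mem _ (hn i) (Nat.le_succ_of_le (hN ⟨i, rfl⟩))⟩

lemma Nondegenerate.finite_milnorRing (h : Nondegenerate W) : Module.Finite ℂ (MilnorRing W) := by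
  obtain ⟨N, hN⟩ := h.exists_X_pow_mem
  have hintegral : ∀ a ∈ mkQ W '' Set.range X, IsIntegral ℂ a := by
    rintro _ ⟨_, ⟨i, rfl⟩, rfl⟩
    refine IsIntegral.of_pow N.succ_pos ?_
    rw [← map_pow, mkQ_eq_zero_iff.2 (hN i)]
    exact isIntegral_zero
  have htop : Algebra.adjoin ℂ (mkQ W '' Set.range X) = ⊤ := by
    rw [← AlgHom.map_adjoin, adjoin_range_X, Algebra.map_top,
      (AlgHom.range_eq_top _).2 (mkQ_surjective W)]
  have hfg := fg_adjoin_of_finite ((Set.finite_range X).image (mkQ W)) hintegral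
  rw [htop] at hfg
  exact ⟨hfg⟩

end Nondegenerate

section QuasiHomogeneous

variable {σ : Type*} [Fintype σ] {W : MvPolynomial σ ℂ} {q : σ → ℚ}

lemma IsQuasiHomogeneous.isWeightedHomogeneous (h : IsQuasiHomogeneous W q) :
    IsWeightedHomogeneous q W 1 := by
  intro a ha
  simpa [Finsupp.weight_eq_sum] using h.2 a (mem_support_iff.2 ha)

lemma IsQuasiHomogeneous.isWeightedHomogeneous_pderiv (h : IsQuasiHomogeneous W q) (i : σ) :
    IsWeightedHomogeneous q (pderiv i W) (1 - q i) :=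
  h.isWeightedHomogeneous.pderiv (sub_add_cancel _ _)

lemma IsQuasiHomogeneous.isWeightedHomogeneous_hess [DecidableEq σ] (h : IsQuasiHomogeneous W q) :
    IsWeightedHomogeneous q (hess W) (topDegree q) := by
  rw [hess, Matrix.det_apply]
  refine IsWeightedHomogeneous.sum _ _ _ fun s _ => ?_
  have hprod : IsWeightedHomogeneous q (∏ i, pderiv (s i) (pderiv i W))
      (∑ i, (1 - q i - q (s i))) :=
    IsWeightedHomogeneous.prod _ _ _ fun i _ =>
      (h.isWeightedHomogeneous_pderiv i).pderiv (sub_add_cancel _ _)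
  have hdeg : ∑ i, (1 - q i - q (s i)) = topDegree q := by
    simp only [topDegree, Finset.sum_sub_distrib, Equiv.sum_comp s q, ← Finset.mul_sum]
    ring
  exact zsmul_mem (K := weightedHomogeneousSubmodule ℂ q _) (hdeg ▸ hprod) _

attribute [local instance] MvPolynomial.weightedGradedAlgebra in
lemma IsQuasiHomogeneous.weightedHomogeneousComponent_mem (h : IsQuasiHomogeneous W q)
    {p : MvPolynomial σ ℂ} (hp : p ∈ jacobianIdeal W) (d : ℚ) :
    weightedHomogeneousComponent q d p ∈ jacobianIdeal W := by
  refine weightedHomogeneousComponent_mem_of_mem ℂ q (Ideal.homogeneous_span _ _ ?_) hp d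
  rintro _ ⟨i, rfl⟩
  exact ⟨_, h.isWeightedHomogeneous_pderiv i⟩

variable [Nontrivial (MilnorRing W)]

lemma IsQuasiHomogeneous.pderiv_eq_zero (h : IsQuasiHomogeneous W q) {i : σ} (hi : q i = 1) :
    pderiv i W = 0 := by
  have hdeg : IsWeightedHomogeneous q (pderiv i W) 0 := by
    simpa [hi] using h.isWeightedHomogeneous_pderiv i
  have hC := eq_C_of_isWeightedHomogeneous_zero h.1 hdeg
  by_contra hne
  have hunit : IsUnit (pderiv i W) := by
    rw [hC] at hne ⊢
    exact ((map_ne_zero_iff _ (C_injective σ ℂ)).1 hne).isUnit.map C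
  exact jacobianIdeal_ne_top (Ideal.eq_top_of_isUnit_mem _ (Ideal.subset_span ⟨i, rfl⟩) hunit)

lemma IsQuasiHomogeneous.span_range_smul_pderiv (h : IsQuasiHomogeneous W q) :
    Ideal.span (Set.range fun i => (1 - q i) • pderiv i W) = jacobianIdeal W := by
  refine le_antisymm (Ideal.span_le.2 ?_) (Ideal.span_le.2 ?_) <;> rintro _ ⟨i, rfl⟩
  · exact Submodule.smul_of_tower_mem _ _ (Ideal.subset_span ⟨i, rfl⟩)
  · by_cases hi : q i = 1
    · simp [h.pderiv_eq_zero hi]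
    · have hmem : (1 - q i) • pderiv i W ∈ Ideal.span (Set.range fun i => (1 - q i) • pderiv i W) :=
        Ideal.subset_span ⟨i, rfl⟩
      have hinv := Submodule.smul_of_tower_mem _ (1 - q i)⁻¹ hmem
      rwa [inv_smul_smul₀ (sub_ne_zero.2 (Ne.symm hi))] at hinv

variable [DecidableEq σ]

/-- By Euler's formula the Hessian matrix, with its columns rescaled by the weights, expresses the
partial derivatives in terms of the variables. -/
lemma hess_notMem_jacobianIdeal (hn : Nondegenerate W) (h : IsQuasiHomogeneous W q) :
    hess W ∉ jacobianIdeal W := by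
  obtain ⟨N, hN⟩ := hn.exists_X_pow_mem
  let A : Matrix σ σ (MvPolynomial σ ℂ) :=
    of fun i j => algebraMap ℚ _ (q j) * pderiv j (pderiv i W)
  have hAX : A *ᵥ X = fun i => (1 - q i) • pderiv i W := by
    ext1 i
    rw [← sum_weight_smul_X_mul_pderiv (h.isWeightedHomogeneous_pderiv i)]
    exact Finset.sum_congr rfl fun j _ => by simp only [A, of_apply, Algebra.smul_def]; ring
  have hdet : A.det = (∏ i, algebraMap ℚ _ (q i)) * hess W := by
    rw [← det_transpose, hess, ← det_mul_column]
    rfl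
  rw [← h.span_range_smul_pderiv] at hN ⊢
  intro hmem
  exact det_notMem_span_range_of_X_pow_mem hAX hN (hdet ▸ Ideal.mul_mem_left _ _ hmem)

end QuasiHomogeneous

section Residue

variable {σ : Type*} [Fintype σ] [DecidableEq σ] {W : MvPolynomial σ ℂ} {q : σ → ℚ}

/-- A residue functional on the Milnor ring of `W`: a linear form that vanishes on all graded pieces
except the one of top degree and takes the value `1` at the Hessian. It computes the pairing, see
`IsMilnorPairing.apply_eq`. -/
structure IsResidue (W : MvPolynomial σ ℂ) (q : σ → ℚ) (ℓ : MilnorRing W →ₗ[ℂ] ℂ) : Prop where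
  map_hess : ℓ (mkQ W (hess W)) = 1
  map_gradedPiece : ∀ d ≠ topDegree q, ∀ a ∈ gradedPiece W q d, ℓ a = 0

lemma exists_isResidue [Nontrivial (MilnorRing W)] (hn : Nondegenerate W)
    (h : IsQuasiHomogeneous W q) : ∃ ℓ, IsResidue W q ℓ := by
  let P := (LinearMap.ker (weightedHomogeneousComponent (R := ℂ) q (topDegree q))).map
    (mkQ W).toLinearMap
  have hess_notMem : mkQ W (hess W) ∉ P := by
    rintro ⟨p, hp, hpW⟩
    have hsub : hess W - p ∈ jacobianIdeal W := by
      rw [← mkQ_eq_zero_iff, map_sub, sub_eq_zero]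
      exact hpW.symm
    have hcomp := h.weightedHomogeneousComponent_mem hsub (topDegree q)
    rw [map_sub, LinearMap.mem_ker.1 hp, sub_zero,
      h.isWeightedHomogeneous_hess.weightedHomogeneousComponent_same] at hcomp
    exact hess_notMem_jacobianIdeal hn h hcomp
  obtain ⟨f, hf, hfP⟩ := Submodule.exists_le_ker_of_notMem hess_notMem
  refine ⟨(f (mkQ W (hess W)))⁻¹ • f, inv_mul_cancel₀ hf, ?_⟩
  rintro d hd _ ⟨p, hp, rfl⟩
  have : f (mkQ W p) = 0 := hfP ⟨p, hp.weightedHomogeneousComponent_ne _ hd.symm, rfl⟩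
  simp [this]

variable {ℓ : MilnorRing W →ₗ[ℂ] ℂ} {p : MilnorRing W → MilnorRing W → ℂ}

lemma IsResidue.nontrivial (hℓ : IsResidue W q ℓ) : Nontrivial (MilnorRing W) :=
  nontrivial_of_ne (mkQ W (hess W)) 0 fun h => by simpa [h] using hℓ.map_hess

lemma IsResidue.finrank_ne_zero (hℓ : IsResidue W q ℓ) [Module.Finite ℂ (MilnorRing W)] :
    (Module.finrank ℂ (MilnorRing W) : ℂ) ≠ 0 :=
  have := hℓ.nontrivial
  Nat.cast_ne_zero.2 Module.finrank_pos.ne'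

lemma IsResidue.belowTop_le_ker (hℓ : IsResidue W q ℓ) : belowTop W q ≤ LinearMap.ker ℓ :=
  iSup₂_le fun d hd => hℓ.map_gradedPiece d hd.ne

lemma IsMilnorPairing.apply_eq (hp : IsMilnorPairing W q p) (hℓ : IsResidue W q ℓ)
    [Module.Finite ℂ (MilnorRing W)] (a b : MilnorRing W) :
    p a b = Module.finrank ℂ (MilnorRing W) * ℓ (a * b) := by
  have hab := hℓ.belowTop_le_ker (hp a b)
  rw [LinearMap.mem_ker, map_sub, map_smul, hℓ.map_hess, smul_eq_mul, mul_one, sub_eq_zero] at hab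
  rw [hab, mul_div_cancel₀ _ hℓ.finrank_ne_zero]

lemma IsMilnorPairing.belowTop_sup_span_hess (hp : IsMilnorPairing W q p) :
    belowTop W q ⊔ Submodule.span ℂ {mkQ W (hess W)} = ⊤ := by
  refine eq_top_iff.2 fun a _ => ?_
  have ha := hp a 1
  rw [mul_one] at ha
  rw [← sub_add_cancel a]
  exact Submodule.add_mem_sup ha (Submodule.smul_mem _ _ (Submodule.mem_span_singleton_self _))

lemma IsResidue.isMilnorPairing (hℓ : IsResidue W q ℓ) [Module.Finite ℂ (MilnorRing W)]
    (htop : belowTop W q ⊔ Submodule.span ℂ {mkQ W (hess W)} = ⊤) :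
    IsMilnorPairing W q fun a b => Module.finrank ℂ (MilnorRing W) * ℓ (a * b) := by
  intro a b
  obtain ⟨x, hx, y, hy, hxy⟩ := Submodule.mem_sup.1 (htop ▸ Submodule.mem_top (x := a * b))
  obtain ⟨c, rfl⟩ := Submodule.mem_span_singleton.1 hy
  have hc : ℓ (a * b) = c := by
    rw [← hxy, map_add, hℓ.belowTop_le_ker hx, map_smul, hℓ.map_hess, zero_add, smul_eq_mul,
      mul_one]
  rwa [mul_div_cancel_left₀ _ hℓ.finrank_ne_zero, hc, ← hxy, add_sub_cancel_right]

end Residue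

section PreservesPairings

variable {σ τ : Type*} [Fintype σ] [DecidableEq σ] [Fintype τ] [DecidableEq τ]
  {W : MvPolynomial σ ℂ} {V : MvPolynomial τ ℂ} {qW : σ → ℚ} {qV : τ → ℚ}
  {φ : MilnorRing W ≃ₐ[ℂ] MilnorRing V}

/-- On the zero ring every function is a pairing, so none of them is preserved. -/
lemma PreservesPairings.nontrivial (hφ : PreservesPairings φ qW qV) :
    Nontrivial (MilnorRing W) := by
  by_contra hW
  have := not_nontrivial_iff_subsingleton.1 hW
  have := φ.symm.injective.subsingleton
  refine zero_ne_one (α := ℂ) (hφ (fun _ _ => 0) (fun _ _ => 1) (fun a b => ?_) (fun a b => ?_) 0 0)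
  · rw [Subsingleton.elim (a * b - _) 0]
    exact zero_mem _
  · rw [Subsingleton.elim (a * b - _) 0]
    exact zero_mem _

variable {ℓW : MilnorRing W →ₗ[ℂ] ℂ} {ℓV : MilnorRing V →ₗ[ℂ] ℂ}
  [Module.Finite ℂ (MilnorRing W)]

lemma PreservesPairings.residue_apply (hφ : PreservesPairings φ qW qV) (hW : IsResidue W qW ℓW)
    (hV : IsResidue V qV ℓV)
    (htopW : belowTop W qW ⊔ Submodule.span ℂ {mkQ W (hess W)} = ⊤)
    (htopV : belowTop V qV ⊔ Submodule.span ℂ {mkQ V (hess V)} = ⊤) (a : MilnorRing W) :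
    ℓV (φ a) = ℓW a := by
  have := Module.Finite.equiv φ.toLinearEquiv
  have key := hφ _ _ (hW.isMilnorPairing htopW) (hV.isMilnorPairing htopV) a 1
  rw [map_one, mul_one, mul_one, ← φ.toLinearEquiv.finrank_eq] at key
  exact (mul_left_cancel₀ hW.finrank_ne_zero key).symm

lemma preservesPairings_of_residue_apply (hW : IsResidue W qW ℓW) (hV : IsResidue V qV ℓV)
    (h : ∀ a, ℓV (φ a) = ℓW a) :
    PreservesPairings φ qW qV := by
  have := Module.Finite.equiv φ.toLinearEquiv
  intro pW pV hpW hpV a b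
  rw [hpW.apply_eq hW, hpV.apply_eq hV, ← map_mul, h, φ.toLinearEquiv.finrank_eq]

end PreservesPairings

section Rename

variable {σ τ R : Type*} [CommSemiring R]

lemma pderiv_rename_of_notMem_range {f : σ → τ} {i : τ}
    (hi : i ∉ Set.range f) (p : MvPolynomial σ R) : pderiv i (rename f p) = 0 := by
  classical
  refine pderiv_eq_zero_of_notMem_vars fun hmem => hi ?_
  obtain ⟨j, -, hj⟩ := Finset.mem_image.1 (vars_rename f p hmem)
  exact ⟨j, hj⟩

lemma monomial_sumElim (a : σ →₀ ℕ) (b : τ →₀ ℕ) (c : R) :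
    monomial (a.sumElim b) c = rename Sum.inl (monomial a c) * rename Sum.inr (monomial b 1) := by
  rw [rename_monomial, rename_monomial, monomial_mul, mul_one, Finsupp.sumElim_eq_add]

end Rename

section DisjointSum

variable {σ τ : Type*}

/-- The sum `W₁ + W₂` of polynomials in disjoint sets of variables, for arbitrary types of
variables. -/
def disjointSum (W₁ : MvPolynomial σ ℂ) (W₂ : MvPolynomial τ ℂ) : MvPolynomial (σ ⊕ τ) ℂ :=
  rename Sum.inl W₁ + rename Sum.inr W₂

variable (W₁ : MvPolynomial σ ℂ) (W₂ : MvPolynomial τ ℂ)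

lemma pderiv_inl_disjointSum (i : σ) :
    pderiv (Sum.inl i) (disjointSum W₁ W₂) = rename Sum.inl (pderiv i W₁) := by
  rw [disjointSum, map_add, pderiv_rename_of_notMem_range (f := Sum.inr) (by simp), add_zero,
    pderiv_rename Sum.inl_injective]

lemma pderiv_inr_disjointSum (i : τ) :
    pderiv (Sum.inr i) (disjointSum W₁ W₂) = rename Sum.inr (pderiv i W₂) := by
  rw [disjointSum, map_add, pderiv_rename_of_notMem_range (f := Sum.inl) (by simp), zero_add,
    pderiv_rename Sum.inr_injective]

lemma hess_disjointSum [Fintype σ] [DecidableEq σ] [Fintype τ] [DecidableEq τ] :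
    hess (disjointSum W₁ W₂) = rename Sum.inl (hess W₁) * rename Sum.inr (hess W₂) := by
  have hblocks : (of fun i j => pderiv i (pderiv j (disjointSum W₁ W₂))) =
      fromBlocks ((of fun i j => pderiv i (pderiv j W₁)).map (rename (R := ℂ) Sum.inl)) 0 0
        ((of fun i j => pderiv i (pderiv j W₂)).map (rename (R := ℂ) Sum.inr)) := by
    ext1 (i | i) (j | j)
    · simp [pderiv_inl_disjointSum, pderiv_rename Sum.inl_injective]
    · simp [pderiv_inr_disjointSum, pderiv_rename_of_notMem_range]
    · simp [pderiv_inl_disjointSum, pderiv_rename_of_notMem_range]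
    · simp [pderiv_inr_disjointSum, pderiv_rename Sum.inr_injective]
  rw [hess, hblocks, det_fromBlocks_zero₂₁, hess, hess, AlgHom.map_det, AlgHom.map_det]
  rfl

lemma topDegree_sumElim [Fintype σ] [Fintype τ] (q₁ : σ → ℚ) (q₂ : τ → ℚ) :
    topDegree (Sum.elim q₁ q₂) = topDegree q₁ + topDegree q₂ := by
  simp only [topDegree, Fintype.sum_sum_type, Sum.elim_inl, Sum.elim_inr]

/-- The algebra map `ι₁ : Q_{W₁} → Q_{W₁+W₂}` induced by the inclusion of variables. -/
def inclLeft : MilnorRing W₁ →ₐ[ℂ] MilnorRing (disjointSum W₁ W₂) :=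
  liftMilnor ((mkQ (disjointSum W₁ W₂)).comp (rename Sum.inl)) fun i => by
    rw [AlgHom.comp_apply, ← pderiv_inl_disjointSum, mkQ_pderiv]

/-- The algebra map `ι₂ : Q_{W₂} → Q_{W₁+W₂}` induced by the inclusion of variables. -/
def inclRight : MilnorRing W₂ →ₐ[ℂ] MilnorRing (disjointSum W₁ W₂) :=
  liftMilnor ((mkQ (disjointSum W₁ W₂)).comp (rename Sum.inr)) fun i => by
    rw [AlgHom.comp_apply, ← pderiv_inr_disjointSum, mkQ_pderiv]

@[simp]
lemma inclLeft_mkQ (p : MvPolynomial σ ℂ) :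
    inclLeft W₁ W₂ (mkQ W₁ p) = mkQ (disjointSum W₁ W₂) (rename Sum.inl p) := rfl

@[simp]
lemma inclRight_mkQ (p : MvPolynomial τ ℂ) :
    inclRight W₁ W₂ (mkQ W₂ p) = mkQ (disjointSum W₁ W₂) (rename Sum.inr p) := rfl

/-- The algebra map `ℂ[x, y] → Q_{W₁} ⊗ Q_{W₂}`, `x ↦ [x] ⊗ 1`, `y ↦ 1 ⊗ [y]`. -/
def toTensor : MvPolynomial (σ ⊕ τ) ℂ →ₐ[ℂ] MilnorRing W₁ ⊗[ℂ] MilnorRing W₂ :=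
  aeval (Sum.elim (fun i => mkQ W₁ (X i) ⊗ₜ[ℂ] 1) fun i => 1 ⊗ₜ[ℂ] mkQ W₂ (X i))

lemma toTensor_rename_inl (p : MvPolynomial σ ℂ) :
    toTensor W₁ W₂ (rename Sum.inl p) = mkQ W₁ p ⊗ₜ 1 := by
  have : (toTensor W₁ W₂).comp (rename Sum.inl) =
      Algebra.TensorProduct.includeLeft.comp (mkQ W₁) := by
    ext i
    simp [toTensor]
  exact DFunLike.congr_fun this p

lemma toTensor_rename_inr (p : MvPolynomial τ ℂ) :
    toTensor W₁ W₂ (rename Sum.inr p) = 1 ⊗ₜ mkQ W₂ p := by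
  have : (toTensor W₁ W₂).comp (rename Sum.inr) =
      Algebra.TensorProduct.includeRight.comp (mkQ W₂) := by
    ext i
    simp [toTensor]
  exact DFunLike.congr_fun this p

lemma toTensor_pderiv (i : σ ⊕ τ) : toTensor W₁ W₂ (pderiv i (disjointSum W₁ W₂)) = 0 := by
  rcases i with i | i
  · rw [pderiv_inl_disjointSum, toTensor_rename_inl, mkQ_pderiv, TensorProduct.zero_tmul]
  · rw [pderiv_inr_disjointSum, toTensor_rename_inr, mkQ_pderiv, TensorProduct.tmul_zero]

/-- The isomorphism `Q_{W₁} ⊗ Q_{W₂} ≃ Q_{W₁+W₂}`, `a ⊗ b ↦ ι₁(a) · ι₂(b)`. -/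
def tensorEquiv : MilnorRing W₁ ⊗[ℂ] MilnorRing W₂ ≃ₐ[ℂ] MilnorRing (disjointSum W₁ W₂) :=
  AlgEquiv.ofAlgHom (Algebra.TensorProduct.productMap (inclLeft W₁ W₂) (inclRight W₁ W₂))
    (liftMilnor (toTensor W₁ W₂) (toTensor_pderiv W₁ W₂))
    (milnorRing_algHom_ext <| by rintro (i | i) <;> simp [liftMilnor_mkQ, toTensor])
    (Algebra.TensorProduct.ext
      (milnorRing_algHom_ext fun i => by simp [liftMilnor_mkQ, toTensor])
      (milnorRing_algHom_ext fun i => by simp [liftMilnor_mkQ, toTensor]))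

lemma tensorEquiv_mkQ_tmul_mkQ (p : MvPolynomial σ ℂ) (r : MvPolynomial τ ℂ) :
    tensorEquiv W₁ W₂ (mkQ W₁ p ⊗ₜ mkQ W₂ r) =
      mkQ (disjointSum W₁ W₂) (rename Sum.inl p * rename Sum.inr r) :=
  (map_mul (mkQ (disjointSum W₁ W₂)) _ _).symm

lemma tensorEquiv_hess_tmul_hess [Fintype σ] [DecidableEq σ] [Fintype τ] [DecidableEq τ] :
    tensorEquiv W₁ W₂ (mkQ W₁ (hess W₁) ⊗ₜ mkQ W₂ (hess W₂)) =
      mkQ (disjointSum W₁ W₂) (hess (disjointSum W₁ W₂)) := by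
  rw [tensorEquiv_mkQ_tmul_mkQ, hess_disjointSum]

variable {W₁ W₂} {q₁ : σ → ℚ} {q₂ : τ → ℚ}

lemma tensorEquiv_tmul_mem_gradedPiece {d₁ d₂ : ℚ} {a : MilnorRing W₁} {b : MilnorRing W₂}
    (ha : a ∈ gradedPiece W₁ q₁ d₁) (hb : b ∈ gradedPiece W₂ q₂ d₂) :
    tensorEquiv W₁ W₂ (a ⊗ₜ b) ∈
      gradedPiece (disjointSum W₁ W₂) (Sum.elim q₁ q₂) (d₁ + d₂) := by
  obtain ⟨p, hp, rfl⟩ := ha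
  obtain ⟨r, hr, rfl⟩ := hb
  refine ⟨rename Sum.inl p * rename Sum.inr r, ?_, (tensorEquiv_mkQ_tmul_mkQ W₁ W₂ p r).symm⟩
  exact (isWeightedHomogeneous_rename (f := Sum.inl) (w := Sum.elim q₁ q₂) hp).mul
    (isWeightedHomogeneous_rename (f := Sum.inr) (w := Sum.elim q₁ q₂) hr)

lemma gradedPiece_disjointSum_le {d : ℚ} {N : Submodule ℂ (MilnorRing (disjointSum W₁ W₂))}
    (h : ∀ d₁ d₂, d₁ + d₂ = d → ∀ a ∈ gradedPiece W₁ q₁ d₁, ∀ b ∈ gradedPiece W₂ q₂ d₂,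
      tensorEquiv W₁ W₂ (a ⊗ₜ b) ∈ N) :
    gradedPiece (disjointSum W₁ W₂) (Sum.elim q₁ q₂) d ≤ N := by
  rintro _ ⟨p, hp, rfl⟩
  rw [← p.support_sum_monomial_coeff, map_sum]
  refine Submodule.sum_mem _ fun c hc => ?_
  obtain ⟨a, b, rfl⟩ : ∃ a b, c = Finsupp.sumElim a b :=
    ⟨_, _, (Finsupp.comapDomain_sumElim_comapDomain c).symm⟩
  have hdeg : Finsupp.weight q₁ a + Finsupp.weight q₂ b = d := by
    rw [← hp (mem_support_iff.1 hc), Finsupp.weight_apply (w := Sum.elim q₁ q₂),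
      Finsupp.sum_sumElim]
    rfl
  rw [monomial_sumElim, AlgHom.toLinearMap_apply, ← tensorEquiv_mkQ_tmul_mkQ]
  exact h _ _ hdeg _ ⟨_, isWeightedHomogeneous_monomial _ a _ rfl, rfl⟩
    _ ⟨_, isWeightedHomogeneous_monomial _ b 1 rfl, rfl⟩

end DisjointSum

section Contraction

variable {σ τ : Type*} {W₁ : MvPolynomial σ ℂ} {W₂ : MvPolynomial τ ℂ}

/-- The linear form `ι₁(a) · ι₂(b) ↦ ℓ₁(a) ℓ₂(b)` on `Q_{W₁+W₂}`. -/
def tensorResidue (ℓ₁ : MilnorRing W₁ →ₗ[ℂ] ℂ) (ℓ₂ : MilnorRing W₂ →ₗ[ℂ] ℂ) :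
    MilnorRing (disjointSum W₁ W₂) →ₗ[ℂ] ℂ :=
  LinearMap.mul' ℂ ℂ ∘ₗ TensorProduct.map ℓ₁ ℓ₂ ∘ₗ (tensorEquiv W₁ W₂).symm.toLinearMap

/-- The contraction `ι₁(a) · ι₂(b) ↦ ℓ₂(b) a` of `Q_{W₁+W₂}` onto `Q_{W₁}`. -/
def contractRight (ℓ₂ : MilnorRing W₂ →ₗ[ℂ] ℂ) :
    MilnorRing (disjointSum W₁ W₂) →ₗ[ℂ] MilnorRing W₁ :=
  (TensorProduct.rid ℂ _).toLinearMap ∘ₗ ℓ₂.lTensor _ ∘ₗ (tensorEquiv W₁ W₂).symm.toLinearMap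

/-- The contraction `ι₁(a) · ι₂(b) ↦ ℓ₁(a) b` of `Q_{W₁+W₂}` onto `Q_{W₂}`. -/
def contractLeft (ℓ₁ : MilnorRing W₁ →ₗ[ℂ] ℂ) :
    MilnorRing (disjointSum W₁ W₂) →ₗ[ℂ] MilnorRing W₂ :=
  (TensorProduct.lid ℂ _).toLinearMap ∘ₗ ℓ₁.rTensor _ ∘ₗ (tensorEquiv W₁ W₂).symm.toLinearMap

variable (ℓ₁ : MilnorRing W₁ →ₗ[ℂ] ℂ) (ℓ₂ : MilnorRing W₂ →ₗ[ℂ] ℂ) (a : MilnorRing W₁)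
  (b : MilnorRing W₂)

@[simp]
lemma tensorResidue_tensorEquiv_tmul :
    tensorResidue ℓ₁ ℓ₂ (tensorEquiv W₁ W₂ (a ⊗ₜ b)) = ℓ₁ a * ℓ₂ b := by
  simp [tensorResidue]

@[simp]
lemma contractRight_tensorEquiv_tmul :
    contractRight ℓ₂ (tensorEquiv W₁ W₂ (a ⊗ₜ b)) = ℓ₂ b • a := by
  simp [contractRight]

@[simp]
lemma contractLeft_tensorEquiv_tmul :
    contractLeft ℓ₁ (tensorEquiv W₁ W₂ (a ⊗ₜ b)) = ℓ₁ a • b := by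
  simp [contractLeft]

end Contraction

section ResidueOfDisjointSum

variable {σ τ : Type*} [Fintype σ] [DecidableEq σ] [Fintype τ] [DecidableEq τ]

lemma belowTop_sup_span_hess_of_surjective {W : MvPolynomial σ ℂ} {V : MvPolynomial τ ℂ}
    {qW : σ → ℚ} {qV : τ → ℚ} {f : MilnorRing W →ₗ[ℂ] MilnorRing V} (hf : Function.Surjective f)
    (hbelow : ∀ d < topDegree qW, gradedPiece W qW d ≤ (belowTop V qV).comap f)
    (hhess : f (mkQ W (hess W)) = mkQ V (hess V))
    (htop : belowTop W qW ⊔ Submodule.span ℂ {mkQ W (hess W)} = ⊤) :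
    belowTop V qV ⊔ Submodule.span ℂ {mkQ V (hess V)} = ⊤ := by
  have hmap : (belowTop W qW).map f ≤ belowTop V qV :=
    Submodule.map_le_iff_le_comap.2 (iSup₂_le hbelow)
  rw [eq_top_iff, ← LinearMap.range_eq_top.2 hf, ← Submodule.map_top, ← htop, Submodule.map_sup,
    Submodule.map_span, Set.image_singleton, hhess]
  exact sup_le_sup_right hmap _

variable {W₁ : MvPolynomial σ ℂ} {W₂ : MvPolynomial τ ℂ} {q₁ : σ → ℚ} {q₂ : τ → ℚ}
  {ℓ₁ : MilnorRing W₁ →ₗ[ℂ] ℂ} {ℓ₂ : MilnorRing W₂ →ₗ[ℂ] ℂ}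

lemma IsResidue.tensorResidue (h₁ : IsResidue W₁ q₁ ℓ₁) (h₂ : IsResidue W₂ q₂ ℓ₂) :
    IsResidue (disjointSum W₁ W₂) (Sum.elim q₁ q₂) (tensorResidue ℓ₁ ℓ₂) where
  map_hess := by
    rw [← tensorEquiv_hess_tmul_hess, tensorResidue_tensorEquiv_tmul, h₁.map_hess, h₂.map_hess,
      mul_one]
  map_gradedPiece d hd := by
    refine gradedPiece_disjointSum_le (N := LinearMap.ker (LG.tensorResidue ℓ₁ ℓ₂))
      fun d₁ d₂ hadd a ha b hb => ?_
    rw [LinearMap.mem_ker, tensorResidue_tensorEquiv_tmul, mul_eq_zero]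
    by_cases hd₁ : d₁ = topDegree q₁
    · have hd₂ : d₂ ≠ topDegree q₂ := by
        rintro rfl
        exact hd (by rw [topDegree_sumElim, ← hadd, hd₁])
      exact Or.inr (h₂.map_gradedPiece d₂ hd₂ b hb)
    · exact Or.inl (h₁.map_gradedPiece d₁ hd₁ a ha)

lemma IsResidue.belowTop_sup_span_hess_left (h₂ : IsResidue W₂ q₂ ℓ₂)
    (htop : belowTop (disjointSum W₁ W₂) (Sum.elim q₁ q₂) ⊔
      Submodule.span ℂ {mkQ _ (hess (disjointSum W₁ W₂))} = ⊤) :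
    belowTop W₁ q₁ ⊔ Submodule.span ℂ {mkQ W₁ (hess W₁)} = ⊤ := by
  refine belowTop_sup_span_hess_of_surjective (f := contractRight ℓ₂)
    (fun a => ⟨tensorEquiv W₁ W₂ (a ⊗ₜ mkQ W₂ (hess W₂)), by simp [h₂.map_hess]⟩)
    (fun d hd => gradedPiece_disjointSum_le fun d₁ d₂ hadd a ha b hb => ?_)
    (by simp [← tensorEquiv_hess_tmul_hess, h₂.map_hess]) htop
  rw [Submodule.mem_comap, contractRight_tensorEquiv_tmul]
  by_cases hd₂ : d₂ = topDegree q₂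
  · have hd₁ : d₁ < topDegree q₁ := by rw [topDegree_sumElim] at hd; linarith
    exact Submodule.smul_mem _ _ (Submodule.mem_iSup_of_mem d₁ (Submodule.mem_iSup_of_mem hd₁ ha))
  · rw [h₂.map_gradedPiece d₂ hd₂ b hb, zero_smul]
    exact zero_mem _

lemma IsResidue.belowTop_sup_span_hess_right (h₁ : IsResidue W₁ q₁ ℓ₁)
    (htop : belowTop (disjointSum W₁ W₂) (Sum.elim q₁ q₂) ⊔
      Submodule.span ℂ {mkQ _ (hess (disjointSum W₁ W₂))} = ⊤) :
    belowTop W₂ q₂ ⊔ Submodule.span ℂ {mkQ W₂ (hess W₂)} = ⊤ := by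
  refine belowTop_sup_span_hess_of_surjective (f := contractLeft ℓ₁)
    (fun b => ⟨tensorEquiv W₁ W₂ (mkQ W₁ (hess W₁) ⊗ₜ b), by simp [h₁.map_hess]⟩)
    (fun d hd => gradedPiece_disjointSum_le fun d₁ d₂ hadd a ha b hb => ?_)
    (by simp [← tensorEquiv_hess_tmul_hess, h₁.map_hess]) htop
  rw [Submodule.mem_comap, contractLeft_tensorEquiv_tmul]
  by_cases hd₁ : d₁ = topDegree q₁
  · have hd₂ : d₂ < topDegree q₂ := by rw [topDegree_sumElim] at hd; linarith
    exact Submodule.smul_mem _ _ (Submodule.mem_iSup_of_mem d₂ (Submodule.mem_iSup_of_mem hd₂ hb))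
  · rw [h₁.map_gradedPiece d₁ hd₁ a ha, zero_smul]
    exact zero_mem _

end ResidueOfDisjointSum

section Equivariant

variable {σ F : Type*} [Fintype σ] {W V : MvPolynomial σ ℂ} {ζ : σ → ℂ}
  [FunLike F (MilnorRing W) (MilnorRing V)] [AlgHomClass F ℂ (MilnorRing W) (MilnorRing V)] {φ : F}

lemma EquivariantAt.apply_mkQ_scaleVars (h : EquivariantAt W V φ ζ) (hζ : ∏ i, ζ i ≠ 0)
    {p r : MvPolynomial σ ℂ} (hpr : φ (mkQ W p) = mkQ V r) :
    φ (mkQ W (scaleVars ζ p)) = mkQ V (scaleVars ζ r) := by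
  have hsmul := h p r hpr
  rw [map_smul] at hsmul
  exact smul_right_injective _ hζ hsmul

lemma EquivariantAt.mkQ_scaleVars_eq_zero (h : EquivariantAt W V φ ζ) (hζ : ∏ i, ζ i ≠ 0)
    {r : MvPolynomial σ ℂ} (hr : mkQ V r = 0) : mkQ V (scaleVars ζ r) = 0 := by
  have hzero := h.apply_mkQ_scaleVars hζ (p := 0) (r := r) (by simp [hr])
  simpa using hzero.symm

lemma equivariantAt_of_forall_X (hV : ∀ i, mkQ V (scaleVars ζ (pderiv i V)) = 0)
    (hX : ∀ i, ∃ r, φ (mkQ W (X i)) = mkQ V r ∧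
      φ (mkQ W (scaleVars ζ (X i))) = mkQ V (scaleVars ζ r)) : EquivariantAt W V φ ζ := by
  have lift (p : MvPolynomial σ ℂ) : ∃ r, φ (mkQ W p) = mkQ V r ∧
      φ (mkQ W (scaleVars ζ p)) = mkQ V (scaleVars ζ r) := by
    induction p using MvPolynomial.induction_on with
    | C c => exact ⟨C c, by simp [← algebraMap_eq, AlgHomClass.commutes]⟩
    | add p₁ p₂ h₁ h₂ =>
      obtain ⟨⟨r₁, h₁, hζ₁⟩, r₂, h₂, hζ₂⟩ := h₁, h₂
      exact ⟨r₁ + r₂, by simp only [map_add, h₁, h₂], by simp only [map_add, hζ₁, hζ₂]⟩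
    | mul_X p i hp =>
      obtain ⟨⟨r, hr, hζr⟩, s, hs, hζs⟩ := hp, hX i
      exact ⟨r * s, by simp only [map_mul, hr, hs], by simp only [map_mul, hζr, hζs]⟩
  intro p r hpr
  obtain ⟨s, hs, hζs⟩ := lift p
  have hrs : mkQ V (scaleVars ζ r) = mkQ V (scaleVars ζ s) := by
    rw [← sub_eq_zero, ← map_sub, ← map_sub, ← AlgHom.comp_apply,
      ← liftMilnor_mkQ ((mkQ V).comp (scaleVars ζ)) hV, map_sub, ← hpr, hs, sub_self, map_zero]
  rw [map_smul, hζs, hrs]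

end Equivariant

section TensorIso

variable {σ₁ σ₂ τ₁ τ₂ : Type*} {W₁ : MvPolynomial σ₁ ℂ} {W₂ : MvPolynomial σ₂ ℂ}
  {V₁ : MvPolynomial τ₁ ℂ} {V₂ : MvPolynomial τ₂ ℂ}

/-- The isomorphism `Q_{W₁+W₂} ≃ Q_{V₁+V₂}`, `ι₁(a) · ι₂(b) ↦ ι₁′(φ₁ a) · ι₂′(φ₂ b)`. -/
def tensorIso (φ₁ : MilnorRing W₁ ≃ₐ[ℂ] MilnorRing V₁) (φ₂ : MilnorRing W₂ ≃ₐ[ℂ] MilnorRing V₂) :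
    MilnorRing (disjointSum W₁ W₂) ≃ₐ[ℂ] MilnorRing (disjointSum V₁ V₂) :=
  (tensorEquiv W₁ W₂).symm.trans
    ((Algebra.TensorProduct.congr φ₁ φ₂).trans (tensorEquiv V₁ V₂))

variable {φ₁ : MilnorRing W₁ ≃ₐ[ℂ] MilnorRing V₁} {φ₂ : MilnorRing W₂ ≃ₐ[ℂ] MilnorRing V₂}

lemma tensorIso_tensorEquiv_tmul (a : MilnorRing W₁) (b : MilnorRing W₂) :
    tensorIso φ₁ φ₂ (tensorEquiv W₁ W₂ (a ⊗ₜ b)) = tensorEquiv V₁ V₂ (φ₁ a ⊗ₜ φ₂ b) := by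
  simp [tensorIso]

lemma tensorIso_mkQ_mul {p : MvPolynomial σ₁ ℂ} {r : MvPolynomial σ₂ ℂ} {p' : MvPolynomial τ₁ ℂ}
    {r' : MvPolynomial τ₂ ℂ} (hp : φ₁ (mkQ W₁ p) = mkQ V₁ p') (hr : φ₂ (mkQ W₂ r) = mkQ V₂ r') :
    tensorIso φ₁ φ₂ (mkQ (disjointSum W₁ W₂) (rename Sum.inl p * rename Sum.inr r)) =
      mkQ (disjointSum V₁ V₂) (rename Sum.inl p' * rename Sum.inr r') := by
  rw [← tensorEquiv_mkQ_tmul_mkQ, tensorIso_tensorEquiv_tmul, hp, hr, tensorEquiv_mkQ_tmul_mkQ]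

lemma tensorIso_mkQ_rename_inl {p : MvPolynomial σ₁ ℂ} {p' : MvPolynomial τ₁ ℂ}
    (hp : φ₁ (mkQ W₁ p) = mkQ V₁ p') :
    tensorIso φ₁ φ₂ (mkQ (disjointSum W₁ W₂) (rename Sum.inl p)) =
      mkQ (disjointSum V₁ V₂) (rename Sum.inl p') := by
  simpa using tensorIso_mkQ_mul (φ₂ := φ₂) (r := 1) (r' := 1) hp (by simp)

lemma tensorIso_mkQ_rename_inr {r : MvPolynomial σ₂ ℂ} {r' : MvPolynomial τ₂ ℂ}
    (hr : φ₂ (mkQ W₂ r) = mkQ V₂ r') :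
    tensorIso φ₁ φ₂ (mkQ (disjointSum W₁ W₂) (rename Sum.inr r)) =
      mkQ (disjointSum V₁ V₂) (rename Sum.inr r') := by
  simpa using tensorIso_mkQ_mul (φ₁ := φ₁) (p := 1) (p' := 1) (by simp) hr

lemma tensorResidue_tensorIso {ℓW₁ : MilnorRing W₁ →ₗ[ℂ] ℂ} {ℓW₂ : MilnorRing W₂ →ₗ[ℂ] ℂ}
    {ℓV₁ : MilnorRing V₁ →ₗ[ℂ] ℂ} {ℓV₂ : MilnorRing V₂ →ₗ[ℂ] ℂ}
    (h₁ : ∀ a, ℓV₁ (φ₁ a) = ℓW₁ a) (h₂ : ∀ b, ℓV₂ (φ₂ b) = ℓW₂ b)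
    (c : MilnorRing (disjointSum W₁ W₂)) :
    tensorResidue ℓV₁ ℓV₂ (tensorIso φ₁ φ₂ c) = tensorResidue ℓW₁ ℓW₂ c := by
  obtain ⟨t, rfl⟩ := (tensorEquiv W₁ W₂).surjective c
  induction t with
  | zero => simp
  | tmul a b => simp [tensorIso_tensorEquiv_tmul, h₁, h₂]
  | add t₁ t₂ ht₁ ht₂ => simp only [map_add, ht₁, ht₂]

end TensorIso

section TensorIsoGraded

variable {σ₁ σ₂ τ₁ τ₂ : Type*} [Fintype σ₁] [DecidableEq σ₁] [Fintype σ₂] [DecidableEq σ₂]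
  [Fintype τ₁] [DecidableEq τ₁] [Fintype τ₂] [DecidableEq τ₂]
  {W₁ : MvPolynomial σ₁ ℂ} {W₂ : MvPolynomial σ₂ ℂ}
  {V₁ : MvPolynomial τ₁ ℂ} {V₂ : MvPolynomial τ₂ ℂ}
  {qW₁ : σ₁ → ℚ} {qW₂ : σ₂ → ℚ} {qV₁ : τ₁ → ℚ} {qV₂ : τ₂ → ℚ}
  {φ₁ : MilnorRing W₁ ≃ₐ[ℂ] MilnorRing V₁} {φ₂ : MilnorRing W₂ ≃ₐ[ℂ] MilnorRing V₂}

lemma PreservesGrading.tensorIso (h₁ : PreservesGrading φ₁ qW₁ qV₁)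
    (h₂ : PreservesGrading φ₂ qW₂ qV₂) :
    PreservesGrading (tensorIso φ₁ φ₂) (Sum.elim qW₁ qW₂) (Sum.elim qV₁ qV₂) := by
  intro d
  refine gradedPiece_disjointSum_le
    (N := (gradedPiece _ _ d).comap (LG.tensorIso φ₁ φ₂).toLinearMap) ?_
  rintro d₁ d₂ rfl a ha b hb
  rw [Submodule.mem_comap, AlgEquiv.toLinearMap_apply, tensorIso_tensorEquiv_tmul]
  exact tensorEquiv_tmul_mem_gradedPiece (h₁ d₁ a ha) (h₂ d₂ b hb)

/-- A pairing on `Q_{W₁+W₂}` forces pairings on `Q_{W₁}` and `Q_{W₂}` to exist, which is what makes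
the hypotheses on `φ₁` and `φ₂` applicable. -/
lemma PreservesPairings.tensorIso [Module.Finite ℂ (MilnorRing W₁)]
    [Module.Finite ℂ (MilnorRing W₂)] {ℓW₁ : MilnorRing W₁ →ₗ[ℂ] ℂ} {ℓW₂ : MilnorRing W₂ →ₗ[ℂ] ℂ}
    {ℓV₁ : MilnorRing V₁ →ₗ[ℂ] ℂ} {ℓV₂ : MilnorRing V₂ →ₗ[ℂ] ℂ}
    (hW₁ : IsResidue W₁ qW₁ ℓW₁) (hW₂ : IsResidue W₂ qW₂ ℓW₂)
    (hV₁ : IsResidue V₁ qV₁ ℓV₁) (hV₂ : IsResidue V₂ qV₂ ℓV₂)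
    (h₁ : PreservesPairings φ₁ qW₁ qV₁) (h₂ : PreservesPairings φ₂ qW₂ qV₂) :
    PreservesPairings (tensorIso φ₁ φ₂) (Sum.elim qW₁ qW₂) (Sum.elim qV₁ qV₂) := by
  intro pW pV hpW hpV
  have := Module.Finite.equiv (tensorEquiv W₁ W₂).toLinearEquiv
  have htopW := hpW.belowTop_sup_span_hess
  have htopV := hpV.belowTop_sup_span_hess
  have hres₁ := h₁.residue_apply hW₁ hV₁ (hW₂.belowTop_sup_span_hess_left htopW)
    (hV₂.belowTop_sup_span_hess_left htopV)
  have hres₂ := h₂.residue_apply hW₂ hV₂ (hW₁.belowTop_sup_span_hess_right htopW)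
    (hV₁.belowTop_sup_span_hess_right htopV)
  exact preservesPairings_of_residue_apply (hW₁.tensorResidue hW₂) (hV₁.tensorResidue hV₂)
    (tensorResidue_tensorIso hres₁ hres₂) pW pV hpW hpV

end TensorIsoGraded

section TensorIsoEquivariant

variable {σ τ : Type*}

lemma scaleVars_sumElim_rename_inl (ζ₁ : σ → ℂ) (ζ₂ : τ → ℂ) (p : MvPolynomial σ ℂ) :
    scaleVars (Sum.elim ζ₁ ζ₂) (rename Sum.inl p) = rename Sum.inl (scaleVars ζ₁ p) := by
  have : (scaleVars (Sum.elim ζ₁ ζ₂)).comp (rename Sum.inl) =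
      (rename Sum.inl).comp (scaleVars ζ₁) := by
    ext1 i
    simp [scaleVars]
  exact DFunLike.congr_fun this p

lemma scaleVars_sumElim_rename_inr (ζ₁ : σ → ℂ) (ζ₂ : τ → ℂ) (p : MvPolynomial τ ℂ) :
    scaleVars (Sum.elim ζ₁ ζ₂) (rename Sum.inr p) = rename Sum.inr (scaleVars ζ₂ p) := by
  have : (scaleVars (Sum.elim ζ₁ ζ₂)).comp (rename Sum.inr) =
      (rename Sum.inr).comp (scaleVars ζ₂) := by
    ext1 i
    simp [scaleVars]
  exact DFunLike.congr_fun this p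

variable [Fintype σ] [Fintype τ] {W₁ V₁ : MvPolynomial σ ℂ} {W₂ V₂ : MvPolynomial τ ℂ}
  {φ₁ : MilnorRing W₁ ≃ₐ[ℂ] MilnorRing V₁} {φ₂ : MilnorRing W₂ ≃ₐ[ℂ] MilnorRing V₂}

lemma EquivariantAt.tensorIso {ζ₁ : σ → ℂ} {ζ₂ : τ → ℂ} (h₁ : EquivariantAt W₁ V₁ φ₁ ζ₁)
    (h₂ : EquivariantAt W₂ V₂ φ₂ ζ₂) :
    EquivariantAt (disjointSum W₁ W₂) (disjointSum V₁ V₂) (tensorIso φ₁ φ₂) (Sum.elim ζ₁ ζ₂) := by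
  by_cases hζ : ∏ i, Sum.elim ζ₁ ζ₂ i = 0
  · intro p r _
    rw [hζ, zero_smul, zero_smul, map_zero]
  obtain ⟨hζ₁, hζ₂⟩ : ∏ i, ζ₁ i ≠ 0 ∧ ∏ i, ζ₂ i ≠ 0 := by
    simpa [Fintype.prod_sum_type, not_or] using hζ
  refine equivariantAt_of_forall_X ?_ ?_
  · rintro (i | i)
    · rw [pderiv_inl_disjointSum, scaleVars_sumElim_rename_inl, ← inclLeft_mkQ,
        h₁.mkQ_scaleVars_eq_zero hζ₁ (mkQ_pderiv V₁ i), map_zero]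
    · rw [pderiv_inr_disjointSum, scaleVars_sumElim_rename_inr, ← inclRight_mkQ,
        h₂.mkQ_scaleVars_eq_zero hζ₂ (mkQ_pderiv V₂ i), map_zero]
  · rintro (i | i)
    · obtain ⟨r, hr⟩ := mkQ_surjective V₁ (φ₁ (mkQ W₁ (X i)))
      refine ⟨rename Sum.inl r, ?_⟩
      rw [← rename_X Sum.inl, scaleVars_sumElim_rename_inl, scaleVars_sumElim_rename_inl]
      exact ⟨tensorIso_mkQ_rename_inl hr.symm,
        tensorIso_mkQ_rename_inl (h₁.apply_mkQ_scaleVars hζ₁ hr.symm)⟩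
    · obtain ⟨r, hr⟩ := mkQ_surjective V₂ (φ₂ (mkQ W₂ (X i)))
      refine ⟨rename Sum.inr r, ?_⟩
      rw [← rename_X Sum.inr, scaleVars_sumElim_rename_inr, scaleVars_sumElim_rename_inr]
      exact ⟨tensorIso_mkQ_rename_inr hr.symm,
        tensorIso_mkQ_rename_inr (h₂.apply_mkQ_scaleVars hζ₂ hr.symm)⟩

end TensorIsoEquivariant

end LG

theorem tensor_of_equivariant_isomorphisms_general {σ τ : Type*} [Fintype σ] [DecidableEq σ]
    [Fintype τ] [DecidableEq τ] {W₁ V₁ : MvPolynomial σ ℂ} {W₂ V₂ : MvPolynomial τ ℂ}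
    {qW₁ qV₁ : σ → ℚ} {qW₂ qV₂ : τ → ℚ}
    (hnW₁ : Nondegenerate W₁) (hqW₁ : IsQuasiHomogeneous W₁ qW₁)
    (hnV₁ : Nondegenerate V₁) (hqV₁ : IsQuasiHomogeneous V₁ qV₁)
    (hnW₂ : Nondegenerate W₂) (hqW₂ : IsQuasiHomogeneous W₂ qW₂)
    (hnV₂ : Nondegenerate V₂) (hqV₂ : IsQuasiHomogeneous V₂ qV₂)
    {φ₁ : MilnorRing W₁ ≃ₐ[ℂ] MilnorRing V₁} {φ₂ : MilnorRing W₂ ≃ₐ[ℂ] MilnorRing V₂}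
    (hgr₁ : PreservesGrading φ₁ qW₁ qV₁) (hgr₂ : PreservesGrading φ₂ qW₂ qV₂)
    (hpair₁ : PreservesPairings φ₁ qW₁ qV₁) (hpair₂ : PreservesPairings φ₂ qW₂ qV₂) :
    ∃ φ : MilnorRing (disjointSum W₁ W₂) ≃ₐ[ℂ] MilnorRing (disjointSum V₁ V₂),
      PreservesGrading φ (Sum.elim qW₁ qW₂) (Sum.elim qV₁ qV₂) ∧
      (∀ ζ₁ ζ₂, EquivariantAt W₁ V₁ φ₁ ζ₁ → EquivariantAt W₂ V₂ φ₂ ζ₂ →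
        EquivariantAt (disjointSum W₁ W₂) (disjointSum V₁ V₂) φ (Sum.elim ζ₁ ζ₂)) ∧
      PreservesPairings φ (Sum.elim qW₁ qW₂) (Sum.elim qV₁ qV₂) ∧
      (∀ p r p' r', φ₁ (mkQ W₁ p) = mkQ V₁ p' → φ₂ (mkQ W₂ r) = mkQ V₂ r' →
        φ (mkQ (disjointSum W₁ W₂) (rename Sum.inl p * rename Sum.inr r)) =
          mkQ (disjointSum V₁ V₂) (rename Sum.inl p' * rename Sum.inr r')) := by
  have := hnW₁.finite_milnorRing
  have := hnW₂.finite_milnorRing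
  have := hpair₁.nontrivial
  have := hpair₂.nontrivial
  have := φ₁.injective.nontrivial
  have := φ₂.injective.nontrivial
  obtain ⟨ℓW₁, hℓW₁⟩ := exists_isResidue hnW₁ hqW₁
  obtain ⟨ℓW₂, hℓW₂⟩ := exists_isResidue hnW₂ hqW₂
  obtain ⟨ℓV₁, hℓV₁⟩ := exists_isResidue hnV₁ hqV₁
  obtain ⟨ℓV₂, hℓV₂⟩ := exists_isResidue hnV₂ hqV₂
  exact ⟨tensorIso φ₁ φ₂, hgr₁.tensorIso hgr₂, fun _ _ h₁ h₂ => h₁.tensorIso h₂,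
    hpair₁.tensorIso hℓW₁ hℓW₂ hℓV₁ hℓV₂ hpair₂, fun _ _ _ _ hp hr => tensorIso_mkQ_mul hp hr⟩

/-- equivariant graded pairing-preserving isomorphisms
`φᵢ : Q_{Wᵢ} → Q_{Vᵢ}` (with `Wᵢ, Vᵢ` admissible in disjoint sets of
variables, `Gᵢ` a group of common diagonal symmetries) combine to a
`(G₁ × G₂)`-equivariant graded pairing-preserving isomorphism
`Q_{W₁+W₂} → Q_{V₁+V₂}` acting as `ι₁(a)·ι₂(b) ↦ ι₁′(φ₁ a)·ι₂′(φ₂ b)`. -/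
theorem tensor_of_equivariant_isomorphisms {m k : ℕ}
    (W₁ V₁ : MvPolynomial (Fin m) ℂ) (W₂ V₂ : MvPolynomial (Fin k) ℂ)
    (qW₁ qV₁ : Fin m → ℚ) (qW₂ qV₂ : Fin k → ℚ)
    (hW₁ : Admissible W₁ qW₁) (hV₁ : Admissible V₁ qV₁)
    (hW₂ : Admissible W₂ qW₂) (hV₂ : Admissible V₂ qV₂)
    (G₁ : Set (Fin m → ℂ)) (G₂ : Set (Fin k → ℂ))
    (hG₁ : ∀ g ∈ G₁, (∀ i, g i ≠ 0) ∧ scaleVars g W₁ = W₁ ∧ scaleVars g V₁ = V₁)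
    (hG₂ : ∀ g ∈ G₂, (∀ i, g i ≠ 0) ∧ scaleVars g W₂ = W₂ ∧ scaleVars g V₂ = V₂)
    (φ₁ : MilnorRing W₁ ≃ₐ[ℂ] MilnorRing V₁)
    (φ₂ : MilnorRing W₂ ≃ₐ[ℂ] MilnorRing V₂)
    (hgr₁ : PreservesGrading ⇑φ₁ qW₁ qV₁) (hgr₂ : PreservesGrading ⇑φ₂ qW₂ qV₂)
    (heqv₁ : ∀ g ∈ G₁, EquivariantAt W₁ V₁ ⇑φ₁ g)
    (heqv₂ : ∀ g ∈ G₂, EquivariantAt W₂ V₂ ⇑φ₂ g)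
    (hpair₁ : PreservesPairings ⇑φ₁ qW₁ qV₁)
    (hpair₂ : PreservesPairings ⇑φ₂ qW₂ qV₂) :
    ∃ φ : MilnorRing (sumPoly W₁ W₂) ≃ₐ[ℂ] MilnorRing (sumPoly V₁ V₂),
      PreservesGrading ⇑φ (Sum.elim qW₁ qW₂) (Sum.elim qV₁ qV₂) ∧
      (∀ g₁ ∈ G₁, ∀ g₂ ∈ G₂,
        EquivariantAt (sumPoly W₁ W₂) (sumPoly V₁ V₂) ⇑φ (Sum.elim g₁ g₂)) ∧
      PreservesPairings ⇑φ (Sum.elim qW₁ qW₂) (Sum.elim qV₁ qV₂) ∧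
      (∀ p r p' r', φ₁ (mkQ W₁ p) = mkQ V₁ p' → φ₂ (mkQ W₂ r) = mkQ V₂ r' →
        φ (mkQ (sumPoly W₁ W₂) (rename Sum.inl p * rename Sum.inr r)) =
          mkQ (sumPoly V₁ V₂) (rename Sum.inl p' * rename Sum.inr r')) := by
  obtain ⟨φ, hgr, heqv, hpair, hmul⟩ := tensor_of_equivariant_isomorphisms_general
    hW₁.1 hW₁.2.1 hV₁.1 hV₁.2.1 hW₂.1 hW₂.2.1 hV₂.1 hV₂.2.1 hgr₁ hgr₂ hpair₁ hpair₂
  exact ⟨φ, hgr, fun g₁ hg₁ g₂ hg₂ => heqv g₁ g₂ (heqv₁ g₁ hg₁) (heqv₂ g₂ hg₂), hpair, hmul⟩
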